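/- arXiv:1007.1232 — 2 statements merged into one kernel-verified Lean document; each statement's English description precedes it below -/
import Mathlib

section
/- Let Γ be a quantum access structure on a finite player set P (monotone and with any two authorized sets intersecting), and let Γ̄ be its purification on P' = P ∪ {p}. Then: (a) Γ̄ is self-dual, i.e. for every Z ⊆ P', Z ∈ Γ̄ if and only if P' \ Z ∉ Γ̄; (b) Γ̄ is itself a quantum access structure (monotone with any two authorized sets intersecting); and (c) for every Z ⊆ P one has Z ∈ Γ̄ if and only if Z ∈ Γ (authorized sets of Γ stay authorized and unauthorized sets stay unauthorized). -/
/-- Gottesman's purification of a monotone access structure `Γ` on `P`, adding a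
new player `p`:  `Γ̄ = {Z ⊆ P ∪ {p} : Z ∩ P ∈ Γ, or (p ∈ Z and P \ Z ∉ Γ)}`. -/
def Purification (P : Finset ℕ) (p : ℕ) (Γ : Set (Finset ℕ)) : Set (Finset ℕ) :=
  {Z | Z ⊆ P ∪ {p} ∧ (Z ∩ P ∈ Γ ∨ (p ∈ Z ∧ P \ Z ∉ Γ))}

/-!
Being authorized in the purification is decided by `Z ∩ P` and by whether `p ∈ Z`. Complementation
in `P ∪ {p}` exchanges `Z ∩ P` with `P \ Z` and `p ∈ Z` with `p ∉ Z`. As `Z ∩ P` and `P \ Z` are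
never both in `Γ`, either exactly one of them is, and it alone decides, or neither is, and `p`
breaks the tie; this is self-duality. Two disjoint authorized sets of a monotone self-dual structure
cannot exist: the second would lie in the complement of the first, which is unauthorized.

None of this mentions individual players of `P`, so sets of players may be elements of any
generalized Boolean algebra, with an atom in place of `{p}`; this covers infinite player sets too.
-/

section GeneralizedBooleanAlgebra

variable {α : Type*} [GeneralizedBooleanAlgebra α] {P Q p Z : α} {Γ : Set α}

/-- A monotone access structure on the player set `P`. Sets of players are elements of a
generalized Boolean algebra, such as `Finset ι` or `Set ι`, and `Γ` holds the authorized ones. -/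
structure IsAccessStructure (P : α) (Γ : Set α) : Prop where
  le_players : ∀ X ∈ Γ, X ≤ P
  mono : ∀ X Y : α, X ∈ Γ → X ≤ Y → Y ≤ P → Y ∈ Γ

/-- A quantum access structure on `P`: by the no-cloning theorem, two disjoint sets of players
cannot both be authorized. -/
structure IsQuantumAccessStructure (P : α) (Γ : Set α) : Prop extends IsAccessStructure P Γ where
  intersecting : Γ.Intersecting

/-- Self-duality of `Γ` on `P`: of a set of players and its complement in `P`, exactly one is
authorized. It characterizes the access structures of pure-state quantum secret sharing schemes. -/
def IsSelfDualOn (P : α) (Γ : Set α) : Prop :=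
  ∀ Z ≤ P, (Z ∈ Γ ↔ P \ Z ∉ Γ)

/-- The analogue of `Purification` in a generalized Boolean algebra. The element `p` stands
for the singleton of the new player, so that `p ≤ Z` says that this player belongs to `Z`. -/
def purify (P p : α) (Γ : Set α) : Set α :=
  {Z | Z ≤ P ⊔ p ∧ (Z ⊓ P ∈ Γ ∨ (p ≤ Z ∧ P \ Z ∉ Γ))}

theorem mem_purify_iff (hZ : Z ≤ P ⊔ p) :
    Z ∈ purify P p Γ ↔ Z ⊓ P ∈ Γ ∨ (p ≤ Z ∧ P \ Z ∉ Γ) :=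
  and_iff_right hZ

theorem mem_purify_iff_mem (hp : ¬p ≤ P) (hZ : Z ≤ P) : Z ∈ purify P p Γ ↔ Z ∈ Γ := by
  have hpZ : ¬p ≤ Z := fun h ↦ hp (h.trans hZ)
  rw [mem_purify_iff (hZ.trans le_sup_left), inf_eq_left.2 hZ]
  simp only [hpZ, false_and, or_false]

theorem sdiff_inf_eq_sdiff_of_le (h : P ≤ Q) : Q \ Z ⊓ P = P \ Z := by
  rw [sdiff_inf_right_comm, inf_eq_right.2 h]

theorem sdiff_sdiff_eq_inf_of_le (h : P ≤ Q) : P \ (Q \ Z) = Z ⊓ P := by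
  rw [sdiff_sdiff_right, sdiff_eq_bot_iff.2 h, bot_sup_eq, inf_eq_left.2 h, inf_comm]

theorem atom_le_sdiff_iff (hp : IsAtom p) (h : p ≤ Q) : p ≤ Q \ Z ↔ ¬p ≤ Z := by
  rw [le_sdiff, and_iff_right h, hp.not_le_iff_disjoint]

theorem sdiff_mem_purify_iff (hp : IsAtom p) :
    (P ⊔ p) \ Z ∈ purify P p Γ ↔ P \ Z ∈ Γ ∨ (¬p ≤ Z ∧ Z ⊓ P ∉ Γ) := by
  rw [mem_purify_iff sdiff_le, sdiff_inf_eq_sdiff_of_le le_sup_left,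
    sdiff_sdiff_eq_inf_of_le le_sup_left, atom_le_sdiff_iff hp le_sup_right]

theorem isSelfDualOn_purify (hp : IsAtom p) (hΓ : ∀ X ∈ Γ, P \ X ∉ Γ) :
    IsSelfDualOn (P ⊔ p) (purify P p Γ) := by
  intro Z hZ
  have not_both : Z ⊓ P ∈ Γ → P \ Z ∉ Γ := fun h ↦ by
    simpa only [sdiff_inf_self_right] using hΓ _ h
  rw [mem_purify_iff hZ, sdiff_mem_purify_iff hp]
  tauto

theorem IsAccessStructure.purify (hΓ : IsAccessStructure P Γ) (p : α) :
    IsAccessStructure (P ⊔ p) (purify P p Γ) where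
  le_players _ hX := hX.1
  mono X Y hX hXY hY := by
    refine ⟨hY, hX.2.imp (fun h ↦ ?_) fun ⟨hpX, h⟩ ↦ ⟨hpX.trans hXY, fun hPY ↦ h ?_⟩⟩
    · exact hΓ.mono _ _ h (inf_le_inf_right P hXY) inf_le_right
    · exact hΓ.mono _ _ hPY (sdiff_le_sdiff_left hXY) sdiff_le

theorem IsAccessStructure.isQuantumAccessStructure_of_isSelfDualOn (hΓ : IsAccessStructure P Γ)
    (hdual : IsSelfDualOn P Γ) : IsQuantumAccessStructure P Γ where
  toIsAccessStructure := hΓ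
  intersecting X hX Y hY hXY := by
    have hYX : Y ≤ P \ X := le_sdiff.2 ⟨hΓ.le_players Y hY, hXY.symm⟩
    exact (hdual X (hΓ.le_players X hX)).1 hX (hΓ.mono Y _ hY hYX sdiff_le)

theorem purification_properties_general (hp : IsAtom p) (hpP : ¬p ≤ P)
    (hΓ : IsQuantumAccessStructure P Γ) :
    IsSelfDualOn (P ⊔ p) (purify P p Γ) ∧
    IsQuantumAccessStructure (P ⊔ p) (purify P p Γ) ∧
    (∀ Z ≤ P, (Z ∈ purify P p Γ ↔ Z ∈ Γ)) := by
  have hdual : IsSelfDualOn (P ⊔ p) (purify P p Γ) :=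
    isSelfDualOn_purify hp fun _ hX hPX ↦ hΓ.intersecting hX hPX disjoint_sdiff_self_right
  exact ⟨hdual, (hΓ.toIsAccessStructure.purify p).isQuantumAccessStructure_of_isSelfDualOn hdual,
    fun _ ↦ mem_purify_iff_mem hpP⟩

end GeneralizedBooleanAlgebra

theorem purification_eq_purify (P : Finset ℕ) (p : ℕ) (Γ : Set (Finset ℕ)) :
    Purification P p Γ = purify P {p} Γ := by
  simp only [Purification, purify, Finset.singleton_subset_iff,
    Finset.sup_eq_union, Finset.inf_eq_inter]

/-- the purification `Γ̄` of a quantum access structure `Γ` on `P`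
(monotone, with any two authorized sets intersecting) is (a) self-dual,
(b) itself a quantum access structure, and (c) agrees with `Γ` on subsets of `P`. -/
theorem purification_properties (P : Finset ℕ) (p : ℕ) (hp : p ∉ P)
    (Γ : Set (Finset ℕ))
    (hsub : ∀ X ∈ Γ, X ⊆ P)
    (hmono : ∀ X Y : Finset ℕ, X ∈ Γ → X ⊆ Y → Y ⊆ P → Y ∈ Γ)
    (hint : ∀ X ∈ Γ, ∀ Y ∈ Γ, (X ∩ Y).Nonempty) :
    (∀ Z ⊆ P ∪ {p},
      (Z ∈ Purification P p Γ ↔ (P ∪ {p}) \ Z ∉ Purification P p Γ)) ∧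
    ((∀ X Y : Finset ℕ, X ∈ Purification P p Γ → X ⊆ Y → Y ⊆ P ∪ {p} →
        Y ∈ Purification P p Γ) ∧
      (∀ X ∈ Purification P p Γ, ∀ Y ∈ Purification P p Γ, (X ∩ Y).Nonempty)) ∧
    (∀ Z ⊆ P, (Z ∈ Purification P p Γ ↔ Z ∈ Γ)) := by
  obtain ⟨hdual, hquantum, hagree⟩ := purification_properties_general
    (Finset.isAtom_singleton p) (mt Finset.singleton_subset_iff.1 hp)
    ⟨⟨hsub, hmono⟩, fun X hX Y hY ↦ Finset.not_disjoint_iff_nonempty_inter.2 (hint X hX Y hY)⟩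
  rw [purification_eq_purify]
  exact ⟨hdual, ⟨hquantum.mono, fun X hX Y hY ↦
    Finset.not_disjoint_iff_nonempty_inter.1 (hquantum.intersecting hX hY)⟩, hagree⟩
end

section
/- Let S be an entropy function realizing an access structure Γ on player set Q with secret size c. If A, B ∈ Γ are two authorized sets such that A ∩ B ∉ Γ is unauthorized, then S(A) + S(B) ≥ S(A ∪ B) + S(A ∩ B) + 2c. -/
/-- Information-theoretic model of a perfect quantum secret sharing scheme
(Imai et al.): an entropy function `S` on subsets of `Q ∪ {R}` realizing the
access structure `Γ` on the player set `Q` with secret size `c > 0`,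
where `R ∉ Q` is the reference symbol.  The mutual information of disjoint
`X, Y` is `I(X : Y) = S X + S Y - S (X ∪ Y)`. -/
structure EntropyFn (Q : Finset ℕ) (R : ℕ) (Γ : Set (Finset ℕ)) (c : ℝ)
    (S : Finset ℕ → ℝ) : Prop where
  c_pos : 0 < c
  empty : S ∅ = 0
  nonneg : ∀ X : Finset ℕ, 0 ≤ S X
  submod : ∀ X Y : Finset ℕ, X ⊆ Q ∪ {R} → Y ⊆ Q ∪ {R} →
    S X + S Y ≥ S (X ∪ Y) + S (X ∩ Y)
  purity : ∀ X : Finset ℕ, X ⊆ Q ∪ {R} → S X = S ((Q ∪ {R}) \ X)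
  ref : S {R} = c
  recov : ∀ A ∈ Γ, S A + S {R} - S (A ∪ {R}) = 2 * c
  secrecy : ∀ A : Finset ℕ, A ⊆ Q → A ∉ Γ → S A + S {R} - S (A ∪ {R}) = 0

/-- The mutual information `I(X : Y)` of disjoint `X` and `Y` with respect to the entropy `S`.
Disjointness is not enforced: for overlapping sets this is merely the formula. -/
def mutualInfo {α : Type*} [DecidableEq α] (S : Finset α → ℝ) (X Y : Finset α) : ℝ :=
  S X + S Y - S (X ∪ Y)

/-- Since `S X - I(X : T) = S (X ∪ T) - S T`, this is submodularity of `X ↦ S (X ∪ T)`, which `S`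
passes on because `· ∪ T` distributes over `∪` and `∩`. -/
theorem add_mutualInfo_le_of_submod {α : Type*} [DecidableEq α]
    {S : Finset α → ℝ} {A B T : Finset α}
    (h : S ((A ∪ T) ∪ (B ∪ T)) + S ((A ∪ T) ∩ (B ∪ T)) ≤ S (A ∪ T) + S (B ∪ T)) :
    S (A ∪ B) + S (A ∩ B) + (mutualInfo S A T + mutualInfo S B T) ≤
      S A + S B + (mutualInfo S (A ∪ B) T + mutualInfo S (A ∩ B) T) := by
  rw [← Finset.union_union_distrib_right, ← Finset.inter_union_distrib_right] at h
  simp only [mutualInfo]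
  linarith

namespace EntropyFn

variable {Q : Finset ℕ} {R : ℕ} {Γ : Set (Finset ℕ)} {c : ℝ} {S : Finset ℕ → ℝ} {A B : Finset ℕ}

theorem mutualInfo_of_mem (hS : EntropyFn Q R Γ c S) (hA : A ∈ Γ) :
    mutualInfo S A {R} = 2 * c :=
  hS.recov A hA

theorem mutualInfo_of_notMem (hS : EntropyFn Q R Γ c S) (hAQ : A ⊆ Q) (hA : A ∉ Γ) :
    mutualInfo S A {R} = 0 :=
  hS.secrecy A hAQ hA

theorem submod_union_ref (hS : EntropyFn Q R Γ c S) (hAQ : A ⊆ Q) (hBQ : B ⊆ Q) :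
    S ((A ∪ {R}) ∪ (B ∪ {R})) + S ((A ∪ {R}) ∩ (B ∪ {R})) ≤ S (A ∪ {R}) + S (B ∪ {R}) :=
  hS.submod _ _ (Finset.union_subset_union_left hAQ) (Finset.union_subset_union_left hBQ)

end EntropyFn

/-- if `A, B ∈ Γ` are authorized and `A ∩ B ∉ Γ` is unauthorized, then
`S(A) + S(B) ≥ S(A ∪ B) + S(A ∩ B) + 2c`. -/
theorem entropy_submod_authorized (Q : Finset ℕ) (R : ℕ) (hR : R ∉ Q)
    (Γ : Set (Finset ℕ)) (c : ℝ) (S : Finset ℕ → ℝ)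
    (hsub : ∀ X ∈ Γ, X ⊆ Q)
    (hmono : ∀ X Y : Finset ℕ, X ∈ Γ → X ⊆ Y → Y ⊆ Q → Y ∈ Γ)
    (hS : EntropyFn Q R Γ c S) :
    ∀ A ∈ Γ, ∀ B ∈ Γ, A ∩ B ∉ Γ →
      S A + S B ≥ S (A ∪ B) + S (A ∩ B) + 2 * c := by
  intro A hA B hB hAB
  have hAQ : A ⊆ Q := hsub A hA
  have hBQ : B ⊆ Q := hsub B hB
  have union_mem : A ∪ B ∈ Γ :=
    hmono A _ hA Finset.subset_union_left (Finset.union_subset hAQ hBQ)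
  have inter_subset : A ∩ B ⊆ Q := Finset.inter_subset_left.trans hAQ
  have gap := add_mutualInfo_le_of_submod (hS.submod_union_ref hAQ hBQ)
  rw [hS.mutualInfo_of_mem hA, hS.mutualInfo_of_mem hB, hS.mutualInfo_of_mem union_mem,
    hS.mutualInfo_of_notMem inter_subset hAB] at gap
  linarith
end
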